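/- arXiv:2507.11672 — 2 statements merged into one kernel-verified Lean document; each statement's English description precedes it below -/
import Mathlib

section
/- Let p_1 < p_2 < p_3 < p_4 be primes with p_1 > 40 and p_{i+1} < 2 p_i for i = 1, 2, 3, and let M = (p_1 p_2 p_3 p_4)^4. Then there exists a set A ⊆ ℤ_M such that: (i) for every prime power p^α with α ≥ 1, Φ_{p^α}(X) ∣ A(X) if and only if p ∈ {p_1, p_2, p_3, p_4} and α ∈ {2, 3, 4}; (ii) |A| = (p_1 p_2 p_3 p_4)^3 and A satisfies (T1) and (T2); (iii) Φ_{p_1 p_2 p_3 p_4}(X) ∣ A(X). -/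
open Polynomial

/-- Mask polynomial of a finite subset of `ZMod M`: `A(X) = ∑_{a ∈ A} X^{a.val}`. -/
noncomputable def zmaskPoly (M : ℕ) (A : Finset (ZMod M)) : Polynomial ℤ :=
  ∑ a ∈ A, X ^ a.val

/-- `S_A^*`: the set of prime powers `p^α` (`α ≥ 1`) with `Φ_{p^α}(X) ∣ A(X)`. -/
def SAstar (M : ℕ) (A : Finset (ZMod M)) : Set ℕ :=
  {s | IsPrimePow s ∧ cyclotomic s ℤ ∣ zmaskPoly M A}

/-- Property (T1): `|A| = ∏_{s ∈ S_A^*} Φ_s(1)`. -/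
def PropT1 (M : ℕ) (A : Finset (ZMod M)) : Prop :=
  (A.card : ℤ) = ∏ᶠ s ∈ SAstar M A, (cyclotomic s ℤ).eval 1

/-- Property (T2): whenever `s_1, …, s_k ∈ S_A^*` are powers of distinct primes,
`Φ_{s_1⋯s_k}(X) ∣ A(X)`. -/
def PropT2 (M : ℕ) (A : Finset (ZMod M)) : Prop :=
  ∀ T : Finset ℕ, T.Nonempty → ↑T ⊆ SAstar M A → (T : Set ℕ).Pairwise Nat.Coprime →
    cyclotomic (∏ s ∈ T, s) ℤ ∣ zmaskPoly M A

lemma geom_zero (w : ℂ) (n : ℕ) (hw : w ≠ 1) (hn : w ^ n = 1) :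
    ∑ i ∈ Finset.range n, w ^ i = 0 := by
  have h := geom_sum_mul w n
  rw [hn, sub_self] at h
  exact (mul_eq_zero.mp h).resolve_right (sub_ne_zero.mpr hw)

lemma sum_range_mul_split (g : ℕ → ℂ) (Q R : ℕ) :
    ∑ k ∈ Finset.range (Q * R), g k =
      ∑ j ∈ Finset.range R, ∑ t ∈ Finset.range Q, g (Q * j + t) := by
  induction R with
  | zero => simp
  | succ R ih => rw [mul_add, mul_one, Finset.sum_range_add, ih, Finset.sum_range_succ]

lemma cyclo_dvd_of_root (F : ℤ[X]) (d : ℕ) (hd : 0 < d)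
    (h : ∀ z : ℂ, IsPrimitiveRoot z d → aeval z F = 0) : cyclotomic d ℤ ∣ F := by
  have hz := Complex.isPrimitiveRoot_exp d hd.ne'
  rw [cyclotomic_eq_minpoly hz hd]
  exact minpoly.isIntegrallyClosed_dvd (hz.isIntegral hd) (h _ hz)

/-- The shift of the slice number `t`. -/
def slShift (a b u e₁ e₂ t : ℕ) : ℕ :=
  if t < a * u then (t % a) * e₁ else ((t - a * u) % b) * e₂

lemma shift_sum (a b u v e₁ e₂ : ℕ) (z : ℂ) (ha : z ^ e₁ ≠ 1) (hb : z ^ e₂ ≠ 1)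
    (ha' : z ^ (e₁ * a) = 1) (hb' : z ^ (e₂ * b) = 1) :
    ∑ t ∈ Finset.range (a * u + b * v), z ^ slShift a b u e₁ e₂ t = 0 := by
  have key : ∀ (n w e : ℕ), z ^ e ≠ 1 → z ^ (e * n) = 1 →
      ∑ t ∈ Finset.range (n * w), z ^ ((t % n) * e) = 0 := by
    intro n w e h1 h2
    rw [sum_range_mul_split]
    apply Finset.sum_eq_zero
    intro j _
    rw [← geom_zero (z ^ e) n h1 (by rw [← pow_mul, h2])]
    apply Finset.sum_congr rfl
    intro t ht
    rw [Nat.mul_add_mod, Nat.mod_eq_of_lt (Finset.mem_range.mp ht), ← pow_mul, mul_comm]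
  rw [Finset.sum_range_add]
  have h1 : ∑ t ∈ Finset.range (a * u), z ^ slShift a b u e₁ e₂ t = 0 := by
    rw [← key a u e₁ ha ha']
    apply Finset.sum_congr rfl
    intro t ht
    rw [slShift, if_pos (Finset.mem_range.mp ht)]
  have h2 : ∑ t ∈ Finset.range (b * v), z ^ slShift a b u e₁ e₂ (a * u + t) = 0 := by
    rw [← key b v e₂ hb hb']
    apply Finset.sum_congr rfl
    intro t ht
    rw [slShift, if_neg (by omega), Nat.add_sub_cancel_left]
  rw [h1, h2, add_zero]

lemma dvd_shift (a b u e₁ e₂ t n : ℕ) (h1 : n ∣ e₁) (h2 : n ∣ e₂) :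
    n ∣ slShift a b u e₁ e₂ t := by
  unfold slShift
  split_ifs
  · exact h1.mul_left _
  · exact h2.mul_left _

theorem construction (a b c e : ℕ) (ha : a.Prime) (hb : b.Prime) (hc : c.Prime) (he : e.Prime)
    (hab : a ≠ b) (hac : a ≠ c) (hae : a ≠ e) (hbc : b ≠ c) (hbe : b ≠ e)
    (hle : a * b ≤ (c * e) ^ 3) :
    ∃ A : Finset (ZMod ((a * b * c * e) ^ 4)), A.card = (a * b * c * e) ^ 3 ∧
      (∀ d, d ∣ (a * b * c * e) ^ 4 → ¬ d ∣ (a * b * c * e) * (c * e) ^ 3 →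
        cyclotomic d ℤ ∣ zmaskPoly ((a * b * c * e) ^ 4) A) ∧
      (∀ d, d ∣ (c * e) ^ 4 → ¬ d ∣ (a * b * c * e) →
        cyclotomic d ℤ ∣ zmaskPoly ((a * b * c * e) ^ 4) A) ∧
      cyclotomic (a * b * c * e) ℤ ∣ zmaskPoly ((a * b * c * e) ^ 4) A := by
  have ha0 := ha.pos
  have hb0 := hb.pos
  have hc0 := hc.pos
  have he0 := he.pos
  have cab := (Nat.coprime_primes ha hb).mpr hab
  have cac := (Nat.coprime_primes ha hc).mpr hac
  have cae := (Nat.coprime_primes ha he).mpr hae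
  have cbc := (Nat.coprime_primes hb hc).mpr hbc
  have cbe := (Nat.coprime_primes hb he).mpr hbe
  obtain ⟨u, v, huv⟩ := Nat.exists_add_mul_eq_of_gcd_dvd_of_mul_pred_le a b ((c * e) ^ 3)
    (by rw [cab.gcd_eq_one]; exact one_dvd _)
    (le_trans (Nat.mul_le_mul (Nat.pred_le _) (Nat.pred_le _)) hle)
  obtain ⟨P, hP⟩ : ∃ P, P = a * b * c * e := ⟨_, rfl⟩
  obtain ⟨Q, hQ⟩ : ∃ Q, Q = (c * e) ^ 3 := ⟨_, rfl⟩
  obtain ⟨R, hR⟩ : ∃ R, R = (a * b) ^ 3 := ⟨_, rfl⟩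
  have hPQR : P ^ 3 = Q * R := by subst hP hQ hR; ring
  have hP0 : 0 < P := by subst hP; positivity
  have hQ0 : 0 < Q := by subst hQ; positivity
  have hR0 : 0 < R := by subst hR; positivity
  obtain ⟨e₁, he1⟩ : ∃ x, x = (b * c * e) ^ 4 := ⟨_, rfl⟩
  obtain ⟨e₂, he2⟩ : ∃ x, x = (a * c * e) ^ 4 := ⟨_, rfl⟩
  have hd1 : (c * e) ^ 4 ∣ e₁ := ⟨b ^ 4, by rw [he1]; ring⟩
  have hd2 : (c * e) ^ 4 ∣ e₂ := ⟨a ^ 4, by rw [he2]; ring⟩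
  have hPe1 : P ∣ e₁ * a := ⟨(b * c * e) ^ 3, by rw [he1, hP]; ring⟩
  have hPe2 : P ∣ e₂ * b := ⟨(a * c * e) ^ 3, by rw [he2, hP]; ring⟩
  have hnPe1 : ¬ P ∣ e₁ := by
    intro h
    have h' : a ∣ (b * c * e) ^ 4 := by
      rw [← he1]; exact dvd_trans ⟨b * c * e, by rw [hP]; ring⟩ h
    have := ((cab.mul_right cac).mul_right cae).pow_right 4
    exact ha.one_lt.ne' (Nat.Coprime.eq_one_of_dvd this h')
  have hnPe2 : ¬ P ∣ e₂ := by
    intro h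
    have h' : b ∣ (a * c * e) ^ 4 := by
      rw [← he2]; exact dvd_trans ⟨a * c * e, by rw [hP]; ring⟩ h
    have := ((cab.symm.mul_right cbc).mul_right cbe).pow_right 4
    exact hb.one_lt.ne' (Nat.Coprime.eq_one_of_dvd this h')
  have hQuv : Q = a * u + b * v := by rw [hQ, ← huv]; ring
  have hceP : (c * e) ^ 4 ∣ P * Q := ⟨a * b, by rw [hP, hQ]; ring⟩
  have hceM : (c * e) ^ 4 ∣ P ^ 4 := ⟨(a * b) ^ 4, by rw [hP]; ring⟩
  have hcopP : ∀ n : ℤ, (((c * e) ^ 4 : ℕ) : ℤ) ∣ P * n → (Q : ℤ) ∣ n := by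
    intro n hn
    have h1 : (((c * e) ^ 4 : ℕ) : ℤ) = ((c * e : ℕ) : ℤ) * Q := by rw [hQ]; push_cast; ring
    have h2 : (P : ℤ) * n = ((c * e : ℕ) : ℤ) * (((a * b : ℕ) : ℤ) * n) := by
      rw [hP]; push_cast; ring
    rw [h1, h2] at hn
    have h3 := Int.dvd_of_mul_dvd_mul_left (by positivity) hn
    refine IsCoprime.dvd_of_dvd_mul_left (Nat.isCoprime_iff_coprime.mpr ?_) h3
    rw [hQ]
    exact ((cac.symm.mul_right cbc.symm).mul_left (cae.symm.mul_right cbe.symm)).pow_left 3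
  rw [← hP, ← hQ]
  have : NeZero (P ^ 4) := ⟨by positivity⟩
  let f : ℕ → ℕ := fun k => P * k + slShift a b u e₁ e₂ (k % Q)
  have hinj : Set.InjOn (fun k => ((f k : ℕ) : ZMod (P ^ 4))) (Finset.range (P ^ 3)) := by
    intro k hk l hl hkl
    have hk' : k < P ^ 3 := by simpa using hk
    have hl' : l < P ^ 3 := by simpa using hl
    have hkl' : ((f k : ℕ) : ZMod (P ^ 4)) = (f l : ℕ) := hkl
    rw [ZMod.natCast_eq_natCast_iff] at hkl'
    have h1 := Nat.modEq_iff_dvd.mp hkl'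
    have hmod : k % Q = l % Q := by
      have h2 : (((c * e) ^ 4 : ℕ) : ℤ) ∣ P * ((l : ℤ) - k) := by
        have h3 : (((c * e) ^ 4 : ℕ) : ℤ) ∣ (f l : ℤ) - f k :=
          dvd_trans (Int.natCast_dvd_natCast.mpr hceM) h1
        have h4 : ∀ t, (((c * e) ^ 4 : ℕ) : ℤ) ∣ (slShift a b u e₁ e₂ t : ℤ) := fun t =>
          Int.natCast_dvd_natCast.mpr (dvd_shift _ _ _ _ _ _ _ hd1 hd2)
        have h5 := dvd_sub (dvd_add h3 (h4 (k % Q))) (h4 (l % Q))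
        have h6 : (f l : ℤ) - f k + (slShift a b u e₁ e₂ (k % Q) : ℤ)
          - (slShift a b u e₁ e₂ (l % Q) : ℤ) = P * ((l : ℤ) - k) := by
          simp only [f]; push_cast; ring
        rwa [h6] at h5
      exact Nat.modEq_iff_dvd.mpr (hcopP _ h2)
    have h7 : (f l : ℤ) - f k = P * ((l : ℤ) - k) := by
      simp only [f, hmod]; push_cast; ring
    have h8 : ((P ^ 4 : ℕ) : ℤ) = (P : ℤ) * ((P ^ 3 : ℕ) : ℤ) := by push_cast; ring
    rw [h7, h8] at h1
    have h9 := Int.dvd_of_mul_dvd_mul_left (by positivity) h1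
    have h10 : k ≡ l [MOD P ^ 3] := Nat.modEq_iff_dvd.mpr h9
    exact Nat.ModEq.eq_of_lt_of_lt h10 hk' hl'
  refine ⟨(Finset.range (P ^ 3)).image (fun k => ((f k : ℕ) : ZMod (P ^ 4))), ?_, ?_⟩
  · rw [Finset.card_image_of_injOn hinj, Finset.card_range]
  have heval : ∀ z : ℂ, z ^ (P ^ 4) = 1 →
      aeval z (zmaskPoly (P ^ 4)
        ((Finset.range (P ^ 3)).image (fun k => ((f k : ℕ) : ZMod (P ^ 4))))) =
      (∑ j ∈ Finset.range R, (z ^ (P * Q)) ^ j) *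
        ∑ t ∈ Finset.range Q, (z ^ P) ^ t * z ^ slShift a b u e₁ e₂ t := by
    intro z hz
    rw [zmaskPoly, Finset.sum_image hinj, map_sum, hPQR, sum_range_mul_split, Finset.sum_mul]
    apply Finset.sum_congr rfl
    intro j _
    rw [Finset.mul_sum]
    apply Finset.sum_congr rfl
    intro t ht
    rw [map_pow, aeval_X, ZMod.val_natCast, ← pow_eq_pow_mod _ hz]
    simp only [f]
    rw [Nat.mul_add_mod, Nat.mod_eq_of_lt (Finset.mem_range.mp ht), ← pow_mul, ← pow_mul,
      ← pow_add, ← pow_add]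
    congr 1
    ring
  have hMeq : P * Q * R = P ^ 4 := by rw [mul_assoc, ← hPQR]; ring
  refine ⟨?_, ?_, ?_⟩
  · intro d hd hnd
    refine cyclo_dvd_of_root _ d (Nat.pos_of_dvd_of_pos hd (by positivity)) ?_
    intro z hz
    have hzM := (hz.pow_eq_one_iff_dvd _).mpr hd
    rw [heval z hzM, geom_zero _ _ (fun h => hnd ((hz.pow_eq_one_iff_dvd _).mp h))
      (by rw [← pow_mul, hMeq, hzM]), zero_mul]
  · intro d hd hnd
    refine cyclo_dvd_of_root _ d (Nat.pos_of_dvd_of_pos hd (by positivity)) ?_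
    intro z hz
    have hzM := (hz.pow_eq_one_iff_dvd _).mpr (hd.trans hceM)
    rw [heval z hzM]
    have : ∑ t ∈ Finset.range Q, (z ^ P) ^ t * z ^ slShift a b u e₁ e₂ t = 0 := by
      rw [← geom_zero (z ^ P) Q (fun h => hnd ((hz.pow_eq_one_iff_dvd _).mp h))
        (by rw [← pow_mul]; exact (hz.pow_eq_one_iff_dvd _).mpr (hd.trans hceP))]
      apply Finset.sum_congr rfl
      intro t _
      rw [(hz.pow_eq_one_iff_dvd _).mpr (hd.trans (dvd_shift _ _ _ _ _ _ _ hd1 hd2)), mul_one]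
    rw [this, mul_zero]
  · refine cyclo_dvd_of_root _ P hP0 ?_
    intro z hz
    have hzM := (hz.pow_eq_one_iff_dvd (P ^ 4)).mpr (dvd_pow_self P (by norm_num))
    rw [heval z hzM]
    have : ∑ t ∈ Finset.range Q, (z ^ P) ^ t * z ^ slShift a b u e₁ e₂ t = 0 := by
      rw [← shift_sum a b u v e₁ e₂ z (fun h => hnPe1 ((hz.pow_eq_one_iff_dvd _).mp h))
        (fun h => hnPe2 ((hz.pow_eq_one_iff_dvd _).mp h))
        ((hz.pow_eq_one_iff_dvd _).mpr hPe1) ((hz.pow_eq_one_iff_dvd _).mpr hPe2), ← hQuv]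
      apply Finset.sum_congr rfl
      intro t _
      rw [hz.pow_eq_one, one_pow, one_mul]
    rw [this, mul_zero]

/-- Distinct cyclotomic polynomials multiply to a divisor. -/
lemma prod_cyclo_dvd (S : Finset ℕ) (hS : ∀ s ∈ S, 0 < s) (F : ℤ[X])
    (h : ∀ s ∈ S, cyclotomic s ℤ ∣ F) : ∏ s ∈ S, cyclotomic s ℤ ∣ F := by
  apply Finset.prod_dvd_of_isRelPrime _ h
  intro s hs t ht hst
  have h1 := cyclotomic.irreducible (hS s hs)
  have h2 := cyclotomic.irreducible (hS t ht)
  show IsRelPrime (cyclotomic s ℤ) (cyclotomic t ℤ)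
  rw [h1.isRelPrime_iff_not_dvd]
  intro hdvd
  have h3 := h1.associated_of_dvd h2 hdvd
  exact hst (cyclotomic_injective (R := ℤ)
    (eq_of_monic_of_associated (cyclotomic.monic s ℤ) (cyclotomic.monic t ℤ) h3))

lemma zmask_eval_one (M : ℕ) (A : Finset (ZMod M)) : (zmaskPoly M A).eval 1 = A.card := by
  simp [zmaskPoly, eval_finsetSum]

/-- The twelve prime powers. -/
def ppSet (a b c e : ℕ) : Finset ℕ :=
  (({a, b, c, e} : Finset ℕ) ×ˢ ({2, 3, 4} : Finset ℕ)).image (fun x => x.1 ^ x.2)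

lemma mem_ppSet {a b c e s : ℕ} : s ∈ ppSet a b c e ↔
    ∃ p α, (p = a ∨ p = b ∨ p = c ∨ p = e) ∧ (α = 2 ∨ α = 3 ∨ α = 4) ∧ p ^ α = s := by
  simp only [ppSet, Finset.mem_image, Finset.mem_product, Finset.mem_insert,
    Finset.mem_singleton, Prod.exists, and_assoc]

lemma pp_inj {p q i j : ℕ} (hp : p.Prime) (hq : q.Prime) (hi : 1 ≤ i)
    (h : p ^ i = q ^ j) : p = q ∧ i = j := by
  have h1 : p = q := eq_of_prime_pow_eq hp.prime hq.prime hi h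
  subst h1
  exact ⟨rfl, Nat.pow_right_injective hp.two_le h⟩

lemma eval_pp {p i : ℕ} (hp : p.Prime) (hi : 1 ≤ i) :
    (cyclotomic (p ^ i) ℤ).eval 1 = p := by
  obtain ⟨k, rfl⟩ : ∃ k, i = k + 1 := ⟨i - 1, by omega⟩
  have := Fact.mk hp
  exact eval_one_cyclotomic_prime_pow k

lemma prod_ppSet (a b c e : ℕ) (ha : a.Prime) (hb : b.Prime) (hc : c.Prime) (he : e.Prime)
    (hab : a ≠ b) (hac : a ≠ c) (hae : a ≠ e) (hbc : b ≠ c) (hbe : b ≠ e) (hce : c ≠ e) :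
    ∏ s ∈ ppSet a b c e, (cyclotomic s ℤ).eval 1 = (((a * b * c * e) ^ 3 : ℕ) : ℤ) := by
  have hpr : ∀ p ∈ ({a, b, c, e} : Finset ℕ), p.Prime := by
    intro p hp
    simp only [Finset.mem_insert, Finset.mem_singleton] at hp
    rcases hp with rfl | rfl | rfl | rfl <;> assumption
  have hal : ∀ i ∈ ({2, 3, 4} : Finset ℕ), 1 ≤ i := by decide
  rw [ppSet, Finset.prod_image, Finset.prod_product]
  · have : ∀ p ∈ ({a, b, c, e} : Finset ℕ), ∏ i ∈ ({2, 3, 4} : Finset ℕ),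
        (cyclotomic (p ^ i) ℤ).eval 1 = (p : ℤ) ^ 3 := by
      intro p hp
      rw [Finset.prod_congr rfl (fun i hi => eval_pp (hpr p hp) (hal i hi))]
      simp
    rw [Finset.prod_congr rfl this]
    rw [Finset.prod_insert (by simp [hab, hac, hae]), Finset.prod_insert (by simp [hbc, hbe]),
      Finset.prod_insert (by simp [hce]), Finset.prod_singleton]
    push_cast
    ring
  · rintro ⟨p, i⟩ hx ⟨q, j⟩ hy hxy
    simp only [Finset.coe_product, Set.mem_prod, Finset.mem_coe] at hx hy
    obtain ⟨h1, h2⟩ := pp_inj (hpr _ hx.1) (hpr _ hy.1) (hal _ hx.2) hxy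
    simp only at h1 h2
    rw [h1, h2]

lemma sq_not_dvd {a n : ℕ} (ha : a.Prime) (h : Nat.Coprime a n) : ¬ a ^ 2 ∣ a * n := by
  intro hd
  rw [pow_two] at hd
  have := Nat.dvd_of_mul_dvd_mul_left ha.pos hd
  exact ha.one_lt.ne' (Nat.Coprime.eq_one_of_dvd h this)

/-- Theorem 9.1: for primes `40 < p₁ < p₂ < p₃ < p₄` with `p_{i+1} < 2 p_i` and
`M = (p₁p₂p₃p₄)^4`, there is a set `A ⊆ ℤ_M` whose prime power cyclotomic divisors are
exactly `Φ_{p_i^α}` for `α ∈ {2,3,4}`, which satisfies (T1) and (T2) with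
`|A| = (p₁p₂p₃p₄)^3`, and which has the unsupported divisor `Φ_{p₁p₂p₃p₄}`. -/
theorem exists_T2_unsupported_four_primes (p₁ p₂ p₃ p₄ : ℕ)
    (h1 : p₁.Prime) (h2 : p₂.Prime) (h3 : p₃.Prime) (h4 : p₄.Prime)
    (hgt : 40 < p₁) (h12 : p₁ < p₂) (h23 : p₂ < p₃) (h34 : p₃ < p₄)
    (hb12 : p₂ < 2 * p₁) (hb23 : p₃ < 2 * p₂) (hb34 : p₄ < 2 * p₃) :
    ∃ A : Finset (ZMod ((p₁ * p₂ * p₃ * p₄) ^ 4)),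
      (∀ p α : ℕ, p.Prime → 1 ≤ α →
        (cyclotomic (p ^ α) ℤ ∣ zmaskPoly ((p₁ * p₂ * p₃ * p₄) ^ 4) A ↔
          (p = p₁ ∨ p = p₂ ∨ p = p₃ ∨ p = p₄) ∧ (α = 2 ∨ α = 3 ∨ α = 4))) ∧
      A.card = (p₁ * p₂ * p₃ * p₄) ^ 3 ∧
      PropT1 ((p₁ * p₂ * p₃ * p₄) ^ 4) A ∧
      PropT2 ((p₁ * p₂ * p₃ * p₄) ^ 4) A ∧
      cyclotomic (p₁ * p₂ * p₃ * p₄) ℤ ∣ zmaskPoly ((p₁ * p₂ * p₃ * p₄) ^ 4) A := by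
  have hp1 := h1.pos
  have hp2 := h2.pos
  have hp3 := h3.pos
  have hp4 := h4.pos
  have n12 : p₁ ≠ p₂ := by omega
  have n13 : p₁ ≠ p₃ := by omega
  have n14 : p₁ ≠ p₄ := by omega
  have n23 : p₂ ≠ p₃ := by omega
  have n24 : p₂ ≠ p₄ := by omega
  have n34 : p₃ ≠ p₄ := by omega
  have c12 := (Nat.coprime_primes h1 h2).mpr n12
  have c13 := (Nat.coprime_primes h1 h3).mpr n13
  have c14 := (Nat.coprime_primes h1 h4).mpr n14
  have c23 := (Nat.coprime_primes h2 h3).mpr n23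
  have c24 := (Nat.coprime_primes h2 h4).mpr n24
  have c34 := (Nat.coprime_primes h3 h4).mpr n34
  have hle : p₁ * p₂ ≤ (p₃ * p₄) ^ 3 :=
    le_trans (Nat.mul_le_mul (by omega) (by omega)) (Nat.le_self_pow (by norm_num) _)
  obtain ⟨A, hcard, hA1, hA2, hA3⟩ := construction p₁ p₂ p₃ p₄ h1 h2 h3 h4 n12 n13 n14 n23 n24 hle
  -- non-divisibility facts
  have q1 : ¬ p₁ ^ 2 ∣ p₁ * p₂ * p₃ * p₄ * (p₃ * p₄) ^ 3 := by
    have := sq_not_dvd h1 (n := p₂ * p₃ * p₄ * (p₃ * p₄) ^ 3)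
      (((c12.mul_right c13).mul_right c14).mul_right ((c13.mul_right c14).pow_right 3))
    convert this using 2
    ring
  have q2 : ¬ p₂ ^ 2 ∣ p₁ * p₂ * p₃ * p₄ * (p₃ * p₄) ^ 3 := by
    have := sq_not_dvd h2 (n := p₁ * p₃ * p₄ * (p₃ * p₄) ^ 3)
      (((c12.symm.mul_right c23).mul_right c24).mul_right ((c23.mul_right c24).pow_right 3))
    convert this using 2
    ring
  have q3 : ¬ p₃ ^ 2 ∣ p₁ * p₂ * p₃ * p₄ := by
    have := sq_not_dvd h3 (n := p₁ * p₂ * p₄) ((c13.symm.mul_right c23.symm).mul_right c34)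
    convert this using 2
    ring
  have q4 : ¬ p₄ ^ 2 ∣ p₁ * p₂ * p₃ * p₄ := by
    have := sq_not_dvd h4 (n := p₁ * p₂ * p₃)
      ((c14.symm.mul_right c24.symm).mul_right c34.symm)
    convert this using 2
    ring
  have hT2 : ∀ T : Finset ℕ, T.Nonempty → T ⊆ ppSet p₁ p₂ p₃ p₄ →
      (T : Set ℕ).Pairwise Nat.Coprime →
      cyclotomic (∏ s ∈ T, s) ℤ ∣ zmaskPoly ((p₁ * p₂ * p₃ * p₄) ^ 4) A := by
    intro T hne hT hco
    have hprod : ∀ N : ℕ, (∀ s ∈ T, s ∣ N) → ∏ s ∈ T, s ∣ N := by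
      intro N hN
      refine Finset.prod_dvd_of_isRelPrime ?_ hN
      intro s hs t ht hst
      exact Nat.coprime_iff_isRelPrime.mp (hco hs ht hst)
    have hM : ∏ s ∈ T, s ∣ (p₁ * p₂ * p₃ * p₄) ^ 4 := by
      apply hprod
      intro s hs
      obtain ⟨p, α, hp, hα, rfl⟩ := mem_ppSet.mp (hT hs)
      refine dvd_trans (pow_dvd_pow p (show α ≤ 4 by omega)) (pow_dvd_pow_of_dvd ?_ 4)
      rcases hp with rfl | rfl | rfl | rfl
      · exact ⟨p₂ * p₃ * p₄, by ring⟩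
      · exact ⟨p₁ * p₃ * p₄, by ring⟩
      · exact ⟨p₁ * p₂ * p₄, by ring⟩
      · exact ⟨p₁ * p₂ * p₃, by ring⟩
    have hmem : ∀ p α, (α = 2 ∨ α = 3 ∨ α = 4) → p ^ α ∈ T → p ^ 2 ∣ ∏ s ∈ T, s := by
      intro p α hα hs
      exact dvd_trans (pow_dvd_pow p (by omega)) (Finset.dvd_prod_of_mem (fun s => s) hs)
    by_cases hq1 : p₁ ^ 2 ∣ ∏ s ∈ T, s
    · exact hA1 _ hM (fun h => q1 (hq1.trans h))
    by_cases hq2 : p₂ ^ 2 ∣ ∏ s ∈ T, s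
    · exact hA1 _ hM (fun h => q2 (hq2.trans h))
    have h34' : ∀ s ∈ T, ∃ p α, (p = p₃ ∨ p = p₄) ∧ (α = 2 ∨ α = 3 ∨ α = 4) ∧ p ^ α = s := by
      intro s hs
      obtain ⟨p, α, hp, hα, rfl⟩ := mem_ppSet.mp (hT hs)
      have := hmem p α hα hs
      rcases hp with rfl | rfl | hp
      · exact absurd this hq1
      · exact absurd this hq2
      · exact ⟨p, α, hp, hα, rfl⟩
    apply hA2
    · apply hprod
      intro s hs
      obtain ⟨p, α, hp, hα, rfl⟩ := h34' s hs
      refine dvd_trans (pow_dvd_pow p (show α ≤ 4 by omega)) (pow_dvd_pow_of_dvd ?_ 4)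
      rcases hp with rfl | rfl
      · exact dvd_mul_right _ _
      · exact dvd_mul_left _ _
    · intro hd
      obtain ⟨s, hs⟩ := hne
      obtain ⟨p, α, hp, hα, rfl⟩ := h34' s hs
      have := (hmem p α hα hs).trans hd
      rcases hp with rfl | rfl
      · exact q3 this
      · exact q4 this
  have hpp : ∀ s ∈ ppSet p₁ p₂ p₃ p₄,
      cyclotomic s ℤ ∣ zmaskPoly ((p₁ * p₂ * p₃ * p₄) ^ 4) A := by
    intro s hs
    have := hT2 {s} (Finset.singleton_nonempty s) (by simpa using hs) (by simp)
    simpa using this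
  have hprime : ∀ p, (p = p₁ ∨ p = p₂ ∨ p = p₃ ∨ p = p₄) → p.Prime := by
    rintro p (rfl | rfl | rfl | rfl) <;> assumption
  have hpos : ∀ s ∈ ppSet p₁ p₂ p₃ p₄, 0 < s := by
    intro s hs
    obtain ⟨p, α, hp, hα, rfl⟩ := mem_ppSet.mp hs
    exact pow_pos (hprime p hp).pos _
  have hpe := prod_ppSet p₁ p₂ p₃ p₄ h1 h2 h3 h4 n12 n13 n14 n23 n24 n34
  have hconv : ∀ p α : ℕ, p.Prime → 1 ≤ α →
      cyclotomic (p ^ α) ℤ ∣ zmaskPoly ((p₁ * p₂ * p₃ * p₄) ^ 4) A →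
      p ^ α ∈ ppSet p₁ p₂ p₃ p₄ := by
    intro p α hp hα hd
    by_contra hn
    have hdv := prod_cyclo_dvd (insert (p ^ α) (ppSet p₁ p₂ p₃ p₄))
      (by
        intro s hs
        rcases Finset.mem_insert.mp hs with rfl | hs
        · exact pow_pos hp.pos _
        · exact hpos s hs)
      (zmaskPoly ((p₁ * p₂ * p₃ * p₄) ^ 4) A)
      (by
        intro s hs
        rcases Finset.mem_insert.mp hs with rfl | hs
        · exact hd
        · exact hpp s hs)
    have hev := eval_dvd (x := 1) hdv
    rw [eval_prod, Finset.prod_insert hn, hpe, zmask_eval_one, hcard, eval_pp hp hα] at hev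
    have hev' : p * (p₁ * p₂ * p₃ * p₄) ^ 3 ∣ (p₁ * p₂ * p₃ * p₄) ^ 3 := by exact_mod_cast hev
    have h0 : 0 < (p₁ * p₂ * p₃ * p₄) ^ 3 := by positivity
    have := Nat.le_of_dvd h0 hev'
    have := hp.two_le
    nlinarith
  have hSA : SAstar ((p₁ * p₂ * p₃ * p₄) ^ 4) A = ↑(ppSet p₁ p₂ p₃ p₄) := by
    ext s
    simp only [SAstar, Set.mem_ofPred_eq, Finset.mem_coe]
    constructor
    · rintro ⟨hs, hd⟩
      obtain ⟨p, k, hp, hk, rfl⟩ := (isPrimePow_nat_iff s).mp hs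
      exact hconv p k hp hk hd
    · intro hs
      refine ⟨?_, hpp s hs⟩
      obtain ⟨p, α, hp, hα, rfl⟩ := mem_ppSet.mp hs
      exact (hprime p hp).isPrimePow.pow (by omega)
  refine ⟨A, ?_, hcard, ?_, ?_, hA3⟩
  · intro p α hp hα
    constructor
    · intro hd
      obtain ⟨q, β, hq, hβ, heq⟩ := mem_ppSet.mp (hconv p α hp hα hd)
      obtain ⟨rfl, rfl⟩ := pp_inj (hprime q hq) hp (by omega) heq
      exact ⟨hq, hβ⟩
    · rintro ⟨hq, hβ⟩
      exact hpp _ (mem_ppSet.mpr ⟨p, α, hq, hβ, rfl⟩)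
  · rw [PropT1, hSA, finprod_mem_coe_finset, hpe, hcard]
  · intro T hne hT hco
    rw [hSA] at hT
    exact hT2 T hne (by exact_mod_cast hT) hco
end

section
/- Let S be a nonempty finite set of integers, each at least 2. Then FIB(S), the minimum cardinality of a nonempty finite A ⊆ ℕ that is fibered on every scale s ∈ S, equals the minimum over all assignment functions σ (functions assigning to each s ∈ S a prime σ(s) dividing s) of the quantity ∏_p p^{E_p(S,σ)}, where for each prime p, E_p(S,σ) := #{α ≥ 1 : ∃ s ∈ S with p^α ∥ s and σ(s) = p}. -/
open Polynomial

/-- The mask polynomial of a finite set of natural numbers: `A(X) = ∑_{a ∈ A} X^a`. -/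
noncomputable def maskPoly (A : Finset ℕ) : Polynomial ℤ := ∑ a ∈ A, X ^ a

/-- The fiber polynomial `F^N_p(X) = 1 + X^{N/p} + ⋯ + X^{(p-1)N/p}`. -/
noncomputable def fiberPoly (N p : ℕ) : Polynomial ℤ :=
  ∑ j ∈ Finset.range p, X ^ (j * (N / p))

/-- A finite set `A ⊆ ℕ` is fibered on scale `N` if some prime `p ∣ N` has
`F^N_p(X) ∣ A(X)`. -/
def IsFibered (A : Finset ℕ) (N : ℕ) : Prop :=
  ∃ p : ℕ, p.Prime ∧ p ∣ N ∧ fiberPoly N p ∣ maskPoly A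

/-- `FIB(S)`: the minimal size of a nonempty finite `A ⊆ ℕ` fibered on each scale `s ∈ S`. -/
noncomputable def FIBs (S : Finset ℕ) : ℕ :=
  sInf {k | ∃ A : Finset ℕ, A.Nonempty ∧ A.card = k ∧ ∀ s ∈ S, IsFibered A s}

/-- `E_p(S,σ) = #{α ≥ 1 : ∃ s ∈ S with p^α ∥ s and σ(s) = p}`. -/
noncomputable def Ecount (S : Finset ℕ) (σ : ℕ → ℕ) (p : ℕ) : ℕ :=
  Set.ncard {α : ℕ | 1 ≤ α ∧ ∃ s ∈ S, p ^ α ∣ s ∧ ¬ p ^ (α + 1) ∣ s ∧ σ s = p}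

lemma fiber_eq (n p : ℕ) (hp : 0 < p) :
    fiberPoly (p * n) p = expand ℤ n (∑ j ∈ Finset.range p, X ^ j) := by
  unfold fiberPoly
  rw [map_sum]
  refine Finset.sum_congr rfl fun j _ => ?_
  rw [Nat.mul_div_cancel_left _ hp, map_pow, expand_X, ← pow_mul, mul_comm]

lemma geom_dvd (p k : ℕ) (hp : p.Prime) (hk : ¬ p ∣ k) :
    (∑ j ∈ Finset.range p, (X : ℤ[X]) ^ j) ∣ expand ℤ k (∑ j ∈ Finset.range p, X ^ j) := by
  have : Fact p.Prime := ⟨hp⟩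
  have hpr : Prime (∑ j ∈ Finset.range p, (X : ℤ[X]) ^ j) := by
    rw [← cyclotomic_prime ℤ p]
    exact (cyclotomic.irreducible hp.pos).prime
  have h1 : (∑ j ∈ Finset.range p, (X : ℤ[X]) ^ j) * (X - 1) = X ^ p - 1 := geom_sum_mul _ _
  have h2 : (∑ j ∈ Finset.range k, (X : ℤ[X]) ^ j) * (X - 1) = X ^ k - 1 := geom_sum_mul _ _
  have h3 : expand ℤ k (∑ j ∈ Finset.range p, (X : ℤ[X]) ^ j) * (X ^ k - 1) = X ^ (p * k) - 1 := by
    have := congrArg (expand ℤ k) h1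
    simpa [map_mul, ← pow_mul, mul_comm] using this
  have h4 : (X : ℤ[X]) ^ p - 1 ∣ X ^ (p * k) - 1 := by
    rw [pow_mul]
    simpa using sub_dvd_pow_sub_pow ((X : ℤ[X]) ^ p) 1 k
  rw [← h1, ← h3, ← h2, ← mul_assoc] at h4
  have hne : (X - 1 : ℤ[X]) ≠ 0 := by
    simpa using X_sub_C_ne_zero (1 : ℤ)
  have h5 := (mul_dvd_mul_iff_right hne).1 h4
  rcases hpr.dvd_or_dvd h5 with h | h
  · exact h
  · exfalso
    obtain ⟨q, hq⟩ := h
    have := congrArg (eval 1) hq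
    simp [eval_finsetSum] at this
    exact hk (Int.natCast_dvd_natCast.1 ⟨_, this⟩)

lemma fiber_dvd (p s k : ℕ) (hp : p.Prime) (hs : p ∣ s) (hk : ¬ p ∣ k) :
    fiberPoly s p ∣ fiberPoly (s * k) p := by
  obtain ⟨n, rfl⟩ := hs
  rw [mul_assoc, fiber_eq _ _ hp.pos, fiber_eq _ _ hp.pos]
  rw [expand_mul]
  obtain ⟨q, hq⟩ := geom_dvd p k hp hk
  rw [hq, map_mul]
  exact dvd_mul_right _ _

lemma fiber_dvd' (p s N : ℕ) (α : ℕ) (hp : p.Prime) (hα : 1 ≤ α) (hs : p ^ α ∣ s) (hN : s ∣ N)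
    (hN' : ¬ p ^ (α + 1) ∣ N) : fiberPoly s p ∣ fiberPoly N p := by
  obtain ⟨k, rfl⟩ := hN
  refine fiber_dvd p s k hp ((dvd_pow_self p (by omega)).trans hs) fun h => hN' ?_
  rw [pow_succ]
  exact mul_dvd_mul hs h

lemma mask_eval (A : Finset ℕ) : (maskPoly A).eval 1 = A.card := by
  simp [maskPoly, eval_finsetSum]

/-- One extension step. -/
lemma step (A : Finset ℕ) (hA : A.Nonempty) (p N : ℕ) (hp : p.Prime) (hN : 0 < N) (hpN : p ∣ N) :
    ∃ B : Finset ℕ, B.Nonempty ∧ B.card = p * A.card ∧ maskPoly A ∣ maskPoly B ∧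
      fiberPoly N p ∣ maskPoly B := by
  classical
  obtain ⟨n, rfl⟩ := hpN
  have hn : 0 < n := Nat.pos_of_mul_pos_left hN
  obtain ⟨b, hb⟩ : ∃ b, ∀ a ∈ A, a < b := ⟨A.sup id + 1, fun a ha =>
    Nat.lt_succ_of_le (Finset.le_sup (f := id) ha)⟩
  set k := p * b + 1 with hk
  have hpk : ¬ p ∣ k := by
    intro h
    have : p ∣ 1 := (Nat.dvd_add_right (dvd_mul_right p b)).1 h
    exact hp.one_lt.ne' (Nat.dvd_one.1 this)
  set t := n * k with ht
  have hbt : b < t := by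
    have : p * b + 1 ≤ t := Nat.le_mul_of_pos_left _ hn
    nlinarith [hp.pos]
  have hinj : Set.InjOn (fun x : ℕ × ℕ => x.1 * t + x.2) ((Finset.range p ×ˢ A : Finset (ℕ × ℕ)) : Set (ℕ × ℕ)) := by
    rintro ⟨i, a⟩ h1 ⟨j, c⟩ h2 h
    simp only [Finset.coe_product, Set.mem_prod, Finset.mem_coe] at h1 h2
    have ha := (hb _ h1.2).trans hbt
    have hc := (hb _ h2.2).trans hbt
    simp only at h ha hc
    have e1 : (i * t + a) % t = a := by
      rw [Nat.mul_add_mod', Nat.mod_eq_of_lt ha]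
    have e2 : (j * t + c) % t = c := by
      rw [Nat.mul_add_mod', Nat.mod_eq_of_lt hc]
    have hac : a = c := by rw [← e1, h, e2]
    subst hac
    have : i * t = j * t := by omega
    have := Nat.eq_of_mul_eq_mul_right (by omega) this
    rw [this]
  have hmask : maskPoly ((Finset.range p ×ˢ A).image fun x : ℕ × ℕ => x.1 * t + x.2) =
      fiberPoly (p * n * k) p * maskPoly A := by
    unfold maskPoly fiberPoly
    rw [Finset.sum_image hinj, Finset.sum_product, Finset.sum_mul_sum]
    rw [mul_assoc, Nat.mul_div_cancel_left _ hp.pos]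
    simp only [pow_add, ht]
  refine ⟨(Finset.range p ×ˢ A).image fun x : ℕ × ℕ => x.1 * t + x.2, ?_, ?_, ?_, ?_⟩
  · exact Finset.Nonempty.image ((Finset.nonempty_range_iff.2 hp.ne_zero).product hA) _
  · rw [Finset.card_image_of_injOn hinj]; simp
  · rw [hmask]; exact dvd_mul_left _ _
  · rw [hmask]; exact (fiber_dvd p _ k hp (dvd_mul_right _ _) hpk).mul_right _

lemma construct (S : Finset ℕ) (h0 : ∀ s ∈ S, s ≠ 0) (T : Finset (ℕ × ℕ))
    (hT : ∀ x ∈ T, x.1.Prime ∧ 1 ≤ x.2) :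
    ∃ A : Finset ℕ, A.Nonempty ∧ A.card = ∏ x ∈ T, x.1 ∧
      ∀ x ∈ T, ∀ s ∈ S, x.2 = s.factorization x.1 → fiberPoly s x.1 ∣ maskPoly A := by
  classical
  induction T using Finset.induction_on with
  | empty => exact ⟨{0}, by simp, by simp, by simp⟩
  | insert x T hx ih =>
    obtain ⟨A, hA, hc, hd⟩ := ih fun y hy => hT y (Finset.mem_insert_of_mem hy)
    obtain ⟨p, α⟩ := x
    obtain ⟨hp, hα⟩ := hT _ (Finset.mem_insert_self _ _)
    simp only at hp hα
    set S' := S.filter (fun s => α = s.factorization p)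
    set m := ∏ s ∈ S', ordCompl[p] s with hm
    have hpm : ¬ p ∣ m := by
      rw [hm, hp.prime.dvd_finsetProd_iff]
      rintro ⟨s, hs, h⟩
      exact Nat.not_dvd_ordCompl hp (h0 s (Finset.mem_filter.1 hs).1) h
    have hm0 : 0 < m := Nat.pos_of_ne_zero fun h => hpm (h ▸ dvd_zero p)
    obtain ⟨B, hB, hBc, hAB, hF⟩ := step A hA p (p ^ α * m) hp
      (Nat.mul_pos (pow_pos hp.pos _) hm0) ((dvd_pow_self p (by omega)).mul_right _)
    refine ⟨B, hB, ?_, ?_⟩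
    · rw [Finset.prod_insert hx, hBc, hc]
    · intro y hy s hs hys
      rcases Finset.mem_insert.1 hy with rfl | hy
      · simp only at hys ⊢
        refine dvd_trans (fiber_dvd' p s _ α hp hα ?_ ?_ ?_) hF
        · rw [hys]; exact Nat.ordProj_dvd s p
        · have h1 : ordCompl[p] s ∣ m :=
            Finset.dvd_prod_of_mem (fun s => ordCompl[p] s) (Finset.mem_filter.2 ⟨hs, hys⟩)
          have h2 := Nat.ordProj_mul_ordCompl_eq_self s p
          rw [← hys] at h1 h2
          calc s = _ := h2.symm
            _ ∣ _ := mul_dvd_mul_left _ h1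
        · rw [pow_succ]
          intro h
          exact hpm ((Nat.mul_dvd_mul_iff_left (pow_pos hp.pos _)).1 h)
      · exact (hd y hy s hs hys).trans hAB

lemma lower (A : Finset ℕ) (T : Finset (ℕ × ℕ)) (hT : ∀ x ∈ T, x.1.Prime ∧ 1 ≤ x.2)
    (h : ∀ x ∈ T, cyclotomic (x.1 ^ x.2) ℤ ∣ maskPoly A) : ∏ x ∈ T, x.1 ∣ A.card := by
  have key : ∏ x ∈ T, cyclotomic (x.1 ^ x.2) ℤ ∣ maskPoly A := by
    refine Finset.prod_dvd_of_isRelPrime ?_ h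
    intro x hx y hy hxy
    have hx' := hT x hx
    have hy' := hT y hy
    have ix := cyclotomic.irreducible (pow_pos hx'.1.pos x.2)
    have iy := cyclotomic.irreducible (pow_pos hy'.1.pos y.2)
    refine (ix.isRelPrime_iff_not_dvd).2 fun hd => hxy ?_
    have ha := (ix.dvd_irreducible_iff_associated iy).1 hd
    have he := eq_of_monic_of_associated (cyclotomic.monic _ _) (cyclotomic.monic _ _) ha
    have he := cyclotomic_injective he
    have h1 : x.1 = y.1 := by
      have : x.1 ∣ y.1 ^ y.2 := he ▸ dvd_pow_self _ (by omega)
      exact (Nat.prime_dvd_prime_iff_eq hx'.1 hy'.1).1 (hx'.1.dvd_of_dvd_pow this)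
    simp only [h1] at he
    exact Prod.ext h1 (Nat.pow_right_injective hy'.1.two_le he)
  obtain ⟨q, hq⟩ := key
  have := congrArg (eval 1) hq
  rw [mask_eval, eval_mul, eval_prod] at this
  have h2 : ∏ x ∈ T, eval 1 (cyclotomic (x.1 ^ x.2) ℤ) = ((∏ x ∈ T, x.1 : ℕ) : ℤ) := by
    push_cast
    refine Finset.prod_congr rfl fun x hx => ?_
    have hx' := hT x hx
    have : Fact x.1.Prime := ⟨hx'.1⟩
    obtain ⟨k, hk⟩ : ∃ k, x.2 = k + 1 := ⟨x.2 - 1, by omega⟩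
    rw [hk, eval_one_cyclotomic_prime_pow]
  rw [h2] at this
  exact Int.natCast_dvd_natCast.1 ⟨_, this⟩

lemma cyc_dvd (p s : ℕ) (hp : p.Prime) (hs : s ≠ 0) (hps : p ∣ s) :
    cyclotomic (p ^ s.factorization p) ℤ ∣ fiberPoly s p := by
  have hα : 1 ≤ s.factorization p := (hp.dvd_iff_one_le_factorization hs).1 hps
  have : cyclotomic (p ^ s.factorization p) ℤ = fiberPoly (p ^ s.factorization p) p := by
    obtain ⟨k, hk⟩ : ∃ k, s.factorization p = k + 1 := ⟨s.factorization p - 1, by omega⟩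
    have : Fact p.Prime := ⟨hp⟩
    rw [hk, cyclotomic_prime_pow_eq_geom_sum hp, pow_succ', fiber_eq _ _ hp.pos]
    simp [map_sum]
  rw [this]
  exact fiber_dvd' p _ s _ hp hα dvd_rfl (Nat.ordProj_dvd s p) (Nat.pow_succ_factorization_not_dvd hs hp)

open Classical in
noncomputable def pairs (S : Finset ℕ) (σ : ℕ → ℕ) : Finset (ℕ × ℕ) :=
  S.image fun s => (σ s, s.factorization (σ s))

lemma pairs_prime (S : Finset ℕ) (h2 : ∀ s ∈ S, 2 ≤ s) (σ : ℕ → ℕ)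
    (hσ : ∀ s ∈ S, (σ s).Prime ∧ σ s ∣ s) : ∀ x ∈ pairs S σ, x.1.Prime ∧ 1 ≤ x.2 := by
  intro x hx
  obtain ⟨s, hs, rfl⟩ := Finset.mem_image.1 hx
  have := h2 s hs
  exact ⟨(hσ s hs).1, ((hσ s hs).1.dvd_iff_one_le_factorization (by omega)).1 (hσ s hs).2⟩

lemma finprod_eq (S : Finset ℕ) (h2 : ∀ s ∈ S, 2 ≤ s) (σ : ℕ → ℕ)
    (hσ : ∀ s ∈ S, (σ s).Prime ∧ σ s ∣ s) :
    ∏ᶠ p : ℕ, p ^ Ecount S σ p = ∏ x ∈ pairs S σ, x.1 := by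
  classical
  have hE : ∀ p, Ecount S σ p = ((pairs S σ).filter (fun x => x.1 = p)).card := by
    intro p
    have hset : {α : ℕ | 1 ≤ α ∧ ∃ s ∈ S, p ^ α ∣ s ∧ ¬ p ^ (α + 1) ∣ s ∧ σ s = p} =
        ((((pairs S σ).filter (fun x => x.1 = p)).image Prod.snd : Finset ℕ) : Set ℕ) := by
      ext α
      simp only [Set.mem_ofPred_eq, Finset.coe_image, Set.mem_image, Finset.mem_coe,
        Finset.mem_filter]
      constructor
      · rintro ⟨h1, s, hs, hd, hnd, rfl⟩
        refine ⟨(σ s, s.factorization (σ s)), ⟨Finset.mem_image_of_mem _ hs, rfl⟩, ?_⟩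
        have hs0 : s ≠ 0 := by have := h2 s hs; omega
        have a1 := ((hσ s hs).1.pow_dvd_iff_le_factorization hs0).1 hd
        have a2 : ¬ (α + 1 ≤ s.factorization (σ s)) := fun h => hnd (((hσ s hs).1.pow_dvd_iff_le_factorization hs0).2 h)
        simp only
        omega
      · rintro ⟨x, ⟨hx, rfl⟩, rfl⟩
        refine ⟨(pairs_prime S h2 σ hσ x hx).2, ?_⟩
        obtain ⟨s, hs, rfl⟩ := Finset.mem_image.1 hx
        have hs0 : s ≠ 0 := by have := h2 s hs; omega
        exact ⟨s, hs, Nat.ordProj_dvd _ _, Nat.pow_succ_factorization_not_dvd hs0 (hσ s hs).1, rfl⟩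
    unfold Ecount
    rw [hset, Set.ncard_coe_finset, Finset.card_image_of_injOn]
    intro x hx y hy hxy
    simp only [Finset.coe_filter, Set.mem_ofPred_eq] at hx hy
    exact Prod.ext (hx.2.trans hy.2.symm) hxy
  rw [finprod_eq_prod_of_mulSupport_subset (s := (pairs S σ).image Prod.fst),
    Finset.prod_comp (fun p : ℕ => p) Prod.fst]
  · exact Finset.prod_congr rfl fun p _ => by rw [hE]
  · intro p hp
    by_contra hn
    apply hp
    have : (pairs S σ).filter (fun x => x.1 = p) = ∅ := by
      rw [Finset.filter_eq_empty_iff]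
      intro x hx hxp
      exact hn (Finset.mem_coe.2 (Finset.mem_image.2 ⟨x, hx, hxp⟩))
    simp [hE, this]

/-- Proposition 3.2: `FIB(S)` equals the minimum of `∏_p p^{E_p(S,σ)}` over all
assignment functions `σ` (assigning to each `s ∈ S` a prime `σ(s) ∣ s`). -/
theorem fib_eq_min_over_assignments (S : Finset ℕ) (hS : S.Nonempty)
    (h2 : ∀ s ∈ S, 2 ≤ s) :
    FIBs S = sInf {k : ℕ | ∃ σ : ℕ → ℕ, (∀ s ∈ S, (σ s).Prime ∧ σ s ∣ s) ∧
      k = ∏ᶠ p : ℕ, p ^ Ecount S σ p} := by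
  classical
  have h0 : ∀ s ∈ S, s ≠ 0 := fun s hs => by have := h2 s hs; omega
  have con : ∀ σ : ℕ → ℕ, (∀ s ∈ S, (σ s).Prime ∧ σ s ∣ s) →
      (∏ᶠ p : ℕ, p ^ Ecount S σ p) ∈
        {k | ∃ A : Finset ℕ, A.Nonempty ∧ A.card = k ∧ ∀ s ∈ S, IsFibered A s} := by
    intro σ hσ
    obtain ⟨A, hA, hc, hd⟩ := construct S h0 (pairs S σ) (pairs_prime S h2 σ hσ)
    refine ⟨A, hA, by rw [hc, finprod_eq S h2 σ hσ], fun s hs => ?_⟩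
    exact ⟨σ s, (hσ s hs).1, (hσ s hs).2,
      hd (σ s, s.factorization (σ s)) (Finset.mem_image_of_mem _ hs) s hs rfl⟩
  have hmf : ∀ s ∈ S, (Nat.minFac s).Prime ∧ Nat.minFac s ∣ s := fun s hs =>
    ⟨Nat.minFac_prime (by have := h2 s hs; omega), Nat.minFac_dvd s⟩
  apply le_antisymm
  · obtain ⟨σ, hσ, hk⟩ := Nat.sInf_mem (s := {k : ℕ | ∃ σ : ℕ → ℕ,
      (∀ s ∈ S, (σ s).Prime ∧ σ s ∣ s) ∧ k = ∏ᶠ p : ℕ, p ^ Ecount S σ p})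
      ⟨_, Nat.minFac, hmf, rfl⟩
    rw [hk]
    exact Nat.sInf_le (con σ hσ)
  · obtain ⟨A, hA, hc, hf⟩ := Nat.sInf_mem (s := {k | ∃ A : Finset ℕ, A.Nonempty ∧ A.card = k ∧
      ∀ s ∈ S, IsFibered A s}) ⟨_, con Nat.minFac hmf⟩
    unfold FIBs
    rw [← hc]
    choose! σ hσ using hf
    have hσ' : ∀ s ∈ S, (σ s).Prime ∧ σ s ∣ s := fun s hs => ⟨(hσ s hs).1, (hσ s hs).2.1⟩
    have hmem : (∏ᶠ p : ℕ, p ^ Ecount S σ p) ∈ {k : ℕ | ∃ σ : ℕ → ℕ,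
        (∀ s ∈ S, (σ s).Prime ∧ σ s ∣ s) ∧ k = ∏ᶠ p : ℕ, p ^ Ecount S σ p} := ⟨σ, hσ', rfl⟩
    refine (Nat.sInf_le hmem).trans ?_
    rw [finprod_eq S h2 σ hσ']
    refine Nat.le_of_dvd hA.card_pos (lower A _ (pairs_prime S h2 σ hσ') ?_)
    intro x hx
    obtain ⟨s, hs, rfl⟩ := Finset.mem_image.1 hx
    exact (cyc_dvd _ s (hσ s hs).1 (h0 s hs) (hσ s hs).2.1).trans (hσ s hs).2.2
end
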